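/- Algorithm II versus Algorithm I global rates: assume m ≥ 3, X has full rank m, and w* ∈ Ω is a global maximizer of det M(w) over Ω̄ with all coordinates positive. If r(0) ≥ 2/m, then r(1) ≤ r(0); that is, the global rate of convergence of Algorithm II (the case α = 1) is no worse than that of Algorithm I (the case α = 0). -/

import Mathlib

open Matrix Filter

/-- The information matrix `M(w) = ∑ i, w_i x_i x_iᵀ`. -/
noncomputable def Mmat {n m : ℕ} (x : Fin n → Fin m → ℝ) (w : Fin n → ℝ) :
    Matrix (Fin m) (Fin m) ℝ :=
  ∑ i, w i • Matrix.vecMulVec (x i) (x i)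

/-- The multiplicative update map `T_α(w)_i = w_i (x_iᵀ M(w)⁻¹ x_i − α)/(m − α)`. -/
noncomputable def Talg {n m : ℕ} (x : Fin n → Fin m → ℝ) (α : ℝ) (w : Fin n → ℝ) :
    Fin n → ℝ :=
  fun i => w i * ((x i ⬝ᵥ (Mmat x w)⁻¹ *ᵥ x i) - α) / ((m : ℝ) - α)

/-- The coordinate-sum linear functional on `ℂⁿ`. -/
noncomputable def sumLM (n : ℕ) : (Fin n → ℂ) →ₗ[ℂ] ℂ where
  toFun γ := ∑ i, γ i
  map_add' a b := by simp [Finset.sum_add_distrib]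
  map_smul' c a := by simp [Finset.mul_sum]

/-- The zero-sum subspace `Γ = {γ : ∑ i, γ_i = 0}` (complexified). -/
noncomputable def Gam (n : ℕ) : Submodule ℂ (Fin n → ℂ) := LinearMap.ker (sumLM n)

/-- The global rate of convergence: the spectral radius of the matrix `R`, viewed (after
complexification) as a linear map restricted to the zero-sum subspace `Γ`. -/
noncomputable def globalRate {n : ℕ} (R : Matrix (Fin n) (Fin n) ℝ)
    (h : ∀ γ ∈ Gam n, Matrix.toLin' (R.map (Complex.ofReal : ℝ → ℂ)) γ ∈ Gam n) : ℝ :=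
  sSup ((fun μ : ℂ => ‖μ‖) ''
    spectrum ℂ ((Matrix.toLin' (R.map (Complex.ofReal : ℝ → ℂ))).restrict h))

open scoped ComplexOrder MatrixOrder in
lemma eig_aux {n : ℕ} (H : Matrix (Fin n) (Fin n) ℝ) (hH : H.PosSemidef)
    (hnn : ∀ i j, 0 ≤ H i j) (w : Fin n → ℝ) (hw : ∀ i, 0 < w i) (m : ℝ)
    (hcol : ∀ j, ∑ i, w i * H i j = m) (γ : Fin n → ℂ) (hγ : γ ≠ 0) (l : ℂ)
    (h : ∀ i, (w i : ℂ) * ∑ j, (H i j : ℂ) * γ j = l * γ i) :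
    ∃ r : ℝ, l = r ∧ 0 ≤ r ∧ r ≤ m := by
  obtain ⟨B, hB⟩ := CStarAlgebra.nonneg_iff_eq_star_mul_self.mp hH.nonneg
  have hC : (H.map (Complex.ofReal : ℝ → ℂ)).PosSemidef := by
    have : H.map (Complex.ofReal : ℝ → ℂ) =
        (B.map (Complex.ofReal : ℝ → ℂ))ᴴ * (B.map (Complex.ofReal : ℝ → ℂ)) := by
      rw [hB]
      ext i j
      simp [Matrix.mul_apply, Matrix.star_eq_conjTranspose]
    rw [this]
    exact Matrix.posSemidef_conjTranspose_mul_self _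
  have h1 := hC.dotProduct_mulVec_nonneg γ
  obtain ⟨k, hk⟩ : ∃ k, γ k ≠ 0 := Function.ne_iff.mp hγ
  set c : ℝ := ∑ i, ‖γ i‖ ^ 2 / w i with hc
  have hcpos : 0 < c := by
    apply Finset.sum_pos' (fun i _ => by have := hw i; positivity)
    exact ⟨k, Finset.mem_univ _, by have := hw k; have := norm_pos_iff.mpr hk; positivity⟩
  have h2 : star γ ⬝ᵥ (H.map (Complex.ofReal : ℝ → ℂ) *ᵥ γ) = l * c := by
    rw [hc]
    push_cast
    rw [Finset.mul_sum]
    simp only [dotProduct, Matrix.mulVec, Matrix.map_apply]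
    refine Finset.sum_congr rfl fun i _ => ?_
    have hwi : (w i : ℂ) ≠ 0 := by exact_mod_cast (hw i).ne'
    have : ∑ j, (H i j : ℂ) * γ j = l * γ i / w i := by
      rw [eq_div_iff hwi, ← h i]; ring
    rw [this, ← Complex.conj_mul']
    simp only [Pi.star_apply, RCLike.star_def]
    ring
  rw [h2] at h1
  have h3 : (0:ℂ) ≤ l := by
    have : l = l * c * ((c⁻¹ : ℝ) : ℂ) := by
      have : (c : ℂ) ≠ 0 := by exact_mod_cast hcpos.ne'
      push_cast; field_simp
    rw [this]
    exact mul_nonneg h1 (by exact_mod_cast (inv_pos.mpr hcpos).le)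
  have h4 : l = (l.re : ℂ) := Complex.eq_re_of_ofReal_le h3
  have h5 : 0 ≤ l.re := (Complex.nonneg_iff.mp h3).1
  refine ⟨l.re, h4, h5, ?_⟩
  have hs : 0 < ∑ i, ‖γ i‖ :=
    Finset.sum_pos' (fun i _ => norm_nonneg _) ⟨k, Finset.mem_univ _, norm_pos_iff.mpr hk⟩
  have h6 : l.re * ∑ i, ‖γ i‖ ≤ m * ∑ i, ‖γ i‖ := by
    calc l.re * ∑ i, ‖γ i‖ = ∑ i, ‖l * γ i‖ := by
          rw [Finset.mul_sum]
          refine Finset.sum_congr rfl fun i _ => ?_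
          rw [norm_mul, h4, Complex.norm_real, Real.norm_of_nonneg h5, Complex.ofReal_re]
      _ ≤ ∑ i, ∑ j, w i * H i j * ‖γ j‖ := by
          refine Finset.sum_le_sum fun i _ => ?_
          rw [← h i, norm_mul, Complex.norm_real, Real.norm_of_nonneg (hw i).le]
          calc _ ≤ w i * ∑ j, ‖(H i j : ℂ) * γ j‖ :=
                mul_le_mul_of_nonneg_left (norm_sum_le _ _) (hw i).le
            _ = _ := by
                rw [Finset.mul_sum]
                refine Finset.sum_congr rfl fun j _ => ?_
                rw [norm_mul, Complex.norm_real, Real.norm_of_nonneg (hnn i j)]; ring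
      _ = m * ∑ i, ‖γ i‖ := by
          rw [Finset.sum_comm, Finset.mul_sum]
          refine Finset.sum_congr rfl fun j _ => ?_
          rw [← Finset.sum_mul, hcol]
  exact le_of_mul_le_mul_right h6 hs

lemma Mmat_eq {n m : ℕ} (x : Fin n → Fin m → ℝ) (w : Fin n → ℝ) :
    Mmat x w = (Matrix.of x)ᵀ * Matrix.diagonal w * Matrix.of x := by
  ext a b
  rw [Matrix.mul_apply]
  simp only [Mmat, Matrix.sum_apply, Matrix.vecMulVec_apply, Matrix.mul_diagonal,
    Matrix.smul_apply, smul_eq_mul, Matrix.transpose_apply, Matrix.of_apply]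
  exact Finset.sum_congr rfl fun i _ => by ring

lemma Mmat_posDef {n m : ℕ} (x : Fin n → Fin m → ℝ) (hrank : (Matrix.of x).rank = m)
    (w : Fin n → ℝ) (hw : ∀ i, 0 < w i) : (Mmat x w).PosDef := by
  rw [Mmat_eq]
  have hinj : Function.Injective (Matrix.of x).mulVec := by
    have h := LinearMap.finrank_range_add_finrank_ker (Matrix.of x).mulVecLin
    rw [← Matrix.rank] at h
    rw [hrank] at h
    simp at h
    have h2 := LinearMap.ker_eq_bot.mp h
    exact h2
  have := (Matrix.PosDef.diagonal (d := w) hw).conjTranspose_mul_mul_same (B := Matrix.of x) hinj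
  simpa using this

lemma Mmat_line {n m : ℕ} (x : Fin n → Fin m → ℝ) (w : Fin n → ℝ) (a b : ℝ) (j : Fin n) :
    Mmat x (a • w + b • Pi.single j 1) = a • Mmat x w + b • Matrix.vecMulVec (x j) (x j) := by
  simp only [Mmat, Pi.add_apply, Pi.smul_apply, smul_eq_mul, add_smul, Finset.sum_add_distrib,
    Finset.smul_sum, mul_smul]
  congr 1
  rw [Finset.sum_eq_single j] <;> simp +contextual [Pi.single_apply]

lemma inv_line {m : ℕ} (M : Matrix (Fin m) (Fin m) ℝ) (hM : M.PosDef) (u v : Fin m → ℝ) (t : ℝ)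
    (ht : 1 + t * (u ⬝ᵥ M⁻¹ *ᵥ u) ≠ 0) :
    v ⬝ᵥ (M + t • Matrix.vecMulVec u u)⁻¹ *ᵥ v =
      v ⬝ᵥ M⁻¹ *ᵥ v - t * (v ⬝ᵥ M⁻¹ *ᵥ u) ^ 2 / (1 + t * (u ⬝ᵥ M⁻¹ *ᵥ u)) := by
  have hdet : IsUnit M.det := hM.det_pos.ne'.isUnit
  have hsym : (M⁻¹)ᵀ = M⁻¹ := by
    have := hM.inv.isHermitian.eq
    simpa using this
  have hinv : (M + t • Matrix.vecMulVec u u)⁻¹ = M⁻¹ -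
      (t / (1 + t * (u ⬝ᵥ M⁻¹ *ᵥ u))) • Matrix.vecMulVec (M⁻¹ *ᵥ u) (u ᵥ* M⁻¹) := by
    apply Matrix.inv_eq_right_inv
    rw [mul_sub, add_mul, Matrix.mul_nonsing_inv _ hdet, Matrix.mul_smul, add_mul,
      Matrix.mul_vecMulVec, Matrix.smul_mul, Matrix.smul_mul, Matrix.vecMulVec_mul,
      Matrix.vecMulVec_mul_vecMulVec, Matrix.mulVec_mulVec, Matrix.mul_nonsing_inv _ hdet,
      Matrix.one_mulVec]
    ext a b
    simp [Matrix.vecMulVec_apply]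
    field_simp
    ring
  have hc : u ⬝ᵥ M⁻¹ *ᵥ v = v ⬝ᵥ M⁻¹ *ᵥ u := by
    rw [Matrix.dotProduct_mulVec, dotProduct_comm, ← Matrix.mulVec_transpose, hsym]
  rw [hinv, Matrix.sub_mulVec, dotProduct_sub, Matrix.smul_mulVec, dotProduct_smul,
    Matrix.vecMulVec_mulVec, ← Matrix.dotProduct_mulVec, hc]
  simp [dotProduct_smul]
  ring

lemma det_line {m : ℕ} (M : Matrix (Fin m) (Fin m) ℝ) (hM : M.PosDef) (u : Fin m → ℝ) (a b : ℝ)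
    (ha : a ≠ 0) :
    (a • M + b • Matrix.vecMulVec u u).det = M.det * (a ^ m * (1 + b / a * (u ⬝ᵥ M⁻¹ *ᵥ u))) := by
  have hdet : IsUnit M.det := hM.det_pos.ne'.isUnit
  have : a • M + b • Matrix.vecMulVec u u =
      a • (M + Matrix.replicateCol Unit ((b / a) • u) * Matrix.replicateRow Unit u) := by
    ext i j
    simp [Matrix.vecMulVec_apply, Matrix.mul_apply]
    field_simp
  have h2 : (Matrix.replicateRow Unit u * M⁻¹ * Matrix.replicateCol Unit ((b / a) • u)) () () =
      b / a * (u ⬝ᵥ M⁻¹ *ᵥ u) := by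
    rw [Matrix.mul_assoc, ← Matrix.replicateCol_mulVec, Matrix.replicateRow_mul_replicateCol_apply,
      Matrix.mulVec_smul, dotProduct_smul, smul_eq_mul]
  rw [this, Matrix.det_smul, Matrix.det_add_replicateCol_mul_replicateRow hdet,
    Matrix.det_unique (n := Unit), Matrix.add_apply]
  simp only [Fintype.card_fin]
  rw [show (default : Unit) = () from rfl, h2, Matrix.one_apply_eq]
  ring

lemma kkt {n m : ℕ} (x : Fin n → Fin m → ℝ) (hrank : (Matrix.of x).rank = m)
    (w : Fin n → ℝ) (hpos : ∀ i, 0 < w i) (hsum : ∑ i, w i = 1)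
    (hopt : ∀ v : Fin n → ℝ, (∀ i, 0 ≤ v i) → ∑ i, v i = 1 →
      (Mmat x v).det ≤ (Mmat x w).det) (i : Fin n) :
    x i ⬝ᵥ (Mmat x w)⁻¹ *ᵥ x i = m := by
  have hM := Mmat_posDef x hrank w hpos
  set d := x i ⬝ᵥ (Mmat x w)⁻¹ *ᵥ x i with hd
  let φ : ℝ → ℝ := fun t => (Mmat x w).det * ((1 - t) ^ m * (1 + t / (1 - t) * d))
  have hφ0 : φ 0 = (Mmat x w).det := by simp [φ]
  have hmax : IsLocalMax φ 0 := by
    have e1 : ∀ᶠ t : ℝ in nhds 0, 0 < 1 - t :=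
      (ContinuousAt.eventually_lt (by fun_prop) (by fun_prop) (by norm_num))
    have e2 : ∀ᶠ t : ℝ in nhds 0, 0 < (1 - t) * w i + t :=
      (ContinuousAt.eventually_lt (by fun_prop) (by fun_prop) (by simpa using hpos i))
    filter_upwards [e1, e2] with t h1 h2
    rw [hφ0]
    have h3 := hopt ((1 - t) • w + t • Pi.single i 1) ?_ ?_
    · rw [Mmat_line, det_line _ hM _ _ _ h1.ne'] at h3
      exact h3
    · intro j
      by_cases hj : j = i
      · subst hj; simpa using h2.le
      · simpa [hj] using mul_nonneg h1.le (hpos j).le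
    · simp [Finset.sum_add_distrib, ← Finset.mul_sum, hsum]
  have hder : HasDerivAt φ ((Mmat x w).det * (d - m)) 0 := by
    have a1 : HasDerivAt (fun t : ℝ => 1 - t) (-1) 0 := (hasDerivAt_id' (0:ℝ)).const_sub 1
    have a2 := a1.pow m
    have a3 := (((hasDerivAt_id' (0:ℝ)).div a1 (by norm_num)).mul_const d).const_add 1
    have a4 := (a2.mul a3).const_mul (Mmat x w).det
    refine a4.congr_deriv ?_
    simp only [Pi.div_apply, Pi.pow_apply, sub_zero, one_pow]
    ring
  have h0 := hmax.hasDerivAt_eq_zero hder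
  have := hM.det_pos.ne'
  have h4 := (mul_eq_zero.mp h0).resolve_left this
  linarith

lemma colsum {n m : ℕ} (x : Fin n → Fin m → ℝ) (w : Fin n → ℝ)
    (hM : (Mmat x w).PosDef) (j : Fin n) :
    ∑ i, w i * (x i ⬝ᵥ (Mmat x w)⁻¹ *ᵥ x j) ^ 2 = x j ⬝ᵥ (Mmat x w)⁻¹ *ᵥ x j := by
  have hdet : IsUnit (Mmat x w).det := hM.det_pos.ne'.isUnit
  set y := (Mmat x w)⁻¹ *ᵥ x j with hy
  have h1 : Mmat x w *ᵥ y = x j := by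
    rw [hy, Matrix.mulVec_mulVec, Matrix.mul_nonsing_inv _ hdet, Matrix.one_mulVec]
  have h2 : y ⬝ᵥ Mmat x w *ᵥ y = ∑ i, w i * (x i ⬝ᵥ y) ^ 2 := by
    rw [Mmat, Matrix.sum_mulVec, dotProduct_sum]
    refine Finset.sum_congr rfl fun i _ => ?_
    rw [Matrix.smul_mulVec, Matrix.vecMulVec_mulVec, dotProduct_smul]
    rw [dotProduct_comm y]
    simp only [smul_eq_mul, op_smul_eq_smul, smul_dotProduct]
    ring
  rw [← h2, h1, dotProduct_comm]

lemma jac {n m : ℕ} (x : Fin n → Fin m → ℝ) (w : Fin n → ℝ)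
    (hM : (Mmat x w).PosDef) (α : ℝ) (hα : (m : ℝ) - α ≠ 0)
    (hk : ∀ i, x i ⬝ᵥ (Mmat x w)⁻¹ *ᵥ x i = m)
    (R : Matrix (Fin n) (Fin n) ℝ)
    (hR : HasFDerivAt (Talg x α) (LinearMap.toContinuousLinearMap (Matrix.toLin' R)) w)
    (i j : Fin n) :
    R i j = (if i = j then 1 else 0) -
      w i * (x i ⬝ᵥ (Mmat x w)⁻¹ *ᵥ x j) ^ 2 / (m - α) := by
  set e : Fin n → ℝ := Pi.single j 1 with he
  have hl : HasDerivAt (fun t : ℝ => w + t • e) e 0 := by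
    simpa using ((hasDerivAt_id' (0:ℝ)).smul_const e).const_add w
  have h1 : HasDerivAt (fun t : ℝ => Talg x α (w + t • e)) (R *ᵥ e) 0 := by
    have hR' : HasFDerivAt (Talg x α) (LinearMap.toContinuousLinearMap (Matrix.toLin' R))
      (w + (0:ℝ) • e) := by simpa using hR
    have := hR'.comp_hasDerivAt (0:ℝ) hl
    simpa [Function.comp_def] using this
  have h2 : HasDerivAt (fun t : ℝ => Talg x α (w + t • e) i) (R i j) 0 := by
    have := hasDerivAt_pi.mp h1 i
    simpa [he] using this
  set k := x i ⬝ᵥ (Mmat x w)⁻¹ *ᵥ x j with hkk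
  have h3 : HasDerivAt (fun t : ℝ => (w i + t * e i) * (m - t * k ^ 2 / (1 + t * m) - α) / (m - α))
      ((if i = j then 1 else 0) - w i * k ^ 2 / (m - α)) 0 := by
    have a0 := hasDerivAt_id' (0:ℝ)
    have a1 := (a0.mul_const (e i)).const_add (w i)
    have a2 := ((a0.mul_const (m:ℝ)).const_add 1)
    have a3 := (((a0.mul_const (k^2)).div a2 (by norm_num)).const_sub (m:ℝ)).sub_const α
    have a4 := (a1.mul a3).div_const ((m:ℝ) - α)
    refine a4.congr_deriv ?_
    simp only [he, Pi.single_apply, Pi.div_apply]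
    split_ifs
    · field_simp
      ring
    · field_simp
      ring
  refine (h2.congr_of_eventuallyEq ?_).unique h3
  have e1 : ∀ᶠ t : ℝ in nhds 0, 0 < 1 + t * m :=
      (ContinuousAt.eventually_lt (by fun_prop) (by fun_prop) (by norm_num))
  filter_upwards [e1] with t ht
  have hml : Mmat x (w + t • e) = Mmat x w + t • Matrix.vecMulVec (x j) (x j) := by
    have := Mmat_line x w 1 t j
    simpa using this
  simp only [Talg]
  rw [hml, inv_line _ hM _ _ _ (by rw [hk]; exact ht.ne'), hk, hk]
  simp [hkk]

lemma hadpsd {n m : ℕ} (x : Fin n → Fin m → ℝ) (M : Matrix (Fin m) (Fin m) ℝ) (hM : M.PosDef) :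
    (Matrix.of fun i j => (x i ⬝ᵥ M⁻¹ *ᵥ x j) ^ 2 : Matrix (Fin n) (Fin n) ℝ).PosSemidef := by
  have h1 : (Matrix.of x * M⁻¹ * (Matrix.of x)ᴴ).PosSemidef :=
    hM.inv.posSemidef.mul_mul_conjTranspose_same _
  have h2 := h1.hadamard h1
  refine (congrArg Matrix.PosSemidef ?_).mpr h2
  ext i j
  have : (Matrix.of x * M⁻¹ * (Matrix.of x)ᴴ) i j = x i ⬝ᵥ M⁻¹ *ᵥ x j := by
    rw [Matrix.mul_assoc]
    rfl
  rw [Matrix.hadamard_apply, this, Matrix.of_apply, sq]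

/-- Algorithm II versus Algorithm I global rates: if `m ≥ 3`, the design matrix has full
rank `m`, `w*` is an interior global maximizer, and `r(0) ≥ 2/m`, then `r(1) ≤ r(0)`: the
global rate of Algorithm II (`α = 1`) is no worse than that of Algorithm I (`α = 0`). -/
theorem stmt_8 {n m : ℕ} (hm : 3 ≤ m) (hnm : m ≤ n)
    (x : Fin n → Fin m → ℝ) (hrank : (Matrix.of x).rank = m)
    (wstar : Fin n → ℝ) (hpos : ∀ i, 0 < wstar i) (hsum : ∑ i, wstar i = 1)
    (hopt : ∀ v : Fin n → ℝ, (∀ i, 0 ≤ v i) → ∑ i, v i = 1 →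
      (Mmat x v).det ≤ (Mmat x wstar).det)
    (R1 R0 : Matrix (Fin n) (Fin n) ℝ)
    (hR1 : HasFDerivAt (Talg x 1)
      (LinearMap.toContinuousLinearMap (Matrix.toLin' R1)) wstar)
    (hR0 : HasFDerivAt (Talg x 0)
      (LinearMap.toContinuousLinearMap (Matrix.toLin' R0)) wstar)
    (hmap1 : ∀ γ ∈ Gam n, Matrix.toLin' (R1.map (Complex.ofReal : ℝ → ℂ)) γ ∈ Gam n)
    (hmap0 : ∀ γ ∈ Gam n, Matrix.toLin' (R0.map (Complex.ofReal : ℝ → ℂ)) γ ∈ Gam n)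
    (hbig : 2 / (m : ℝ) ≤ globalRate R0 hmap0) :
    globalRate R1 hmap1 ≤ globalRate R0 hmap0 := by
  have hM := Mmat_posDef x hrank wstar hpos
  have hk := kkt x hrank wstar hpos hsum hopt
  have hm3 : (3:ℝ) ≤ m := by exact_mod_cast hm
  have j1 := jac x wstar hM 1 (by linarith) hk R1 hR1
  have j0 := jac x wstar hM 0 (by linarith) hk R0 hR0
  set H : Matrix (Fin n) (Fin n) ℝ :=
    Matrix.of fun i j => (x i ⬝ᵥ (Mmat x wstar)⁻¹ *ᵥ x j) ^ 2 with hH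
  have hHp : H.PosSemidef := hadpsd x _ hM
  have hcol : ∀ j, ∑ i, wstar i * H i j = m := fun j => by
    rw [← hk j, ← colsum x wstar hM j]; rfl
  -- action of the complexified Jacobians
  have act : ∀ (α : ℝ) (R : Matrix (Fin n) (Fin n) ℝ), (∀ i j, R i j = (if i = j then 1 else 0) -
      wstar i * (x i ⬝ᵥ (Mmat x wstar)⁻¹ *ᵥ x j) ^ 2 / (m - α)) → ∀ (γ : Fin n → ℂ) (i : Fin n),
      Matrix.toLin' (R.map (Complex.ofReal : ℝ → ℂ)) γ i =
        γ i - ((wstar i : ℂ) * ∑ j, (H i j : ℂ) * γ j) / ((m : ℂ) - α) := by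
    intro α R hR γ i
    rw [Matrix.toLin'_apply]
    simp only [Matrix.mulVec, dotProduct, Matrix.map_apply]
    have : ∀ j, ((R i j : ℝ) : ℂ) * γ j = (if i = j then γ j else 0) -
        (wstar i : ℂ) / ((m : ℂ) - α) * ((H i j : ℂ) * γ j) := by
      intro j
      rw [hR i j]
      simp only [hH, Matrix.of_apply]
      split_ifs <;> push_cast <;> ring
    rw [Finset.sum_congr rfl fun j _ => this j, Finset.sum_sub_distrib, ← Finset.mul_sum]
    simp
    ring
  have hr0 : 0 ≤ globalRate R0 hmap0 := le_trans (by positivity) hbig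
  apply Real.sSup_le _ hr0
  rintro _ ⟨μ, hμ, rfl⟩
  obtain ⟨⟨γ, hγG⟩, hγ⟩ := (Module.End.HasEigenvalue.of_mem_spectrum hμ).exists_hasEigenvector
  have hγ0 : γ ≠ 0 := fun h => hγ.2 (Subtype.ext h)
  have heq : Matrix.toLin' (R1.map (Complex.ofReal : ℝ → ℂ)) γ = μ • γ := by
    have := congrArg Subtype.val hγ.apply_eq_smul
    simpa using this
  have hmc : (m : ℂ) - ((1:ℝ) : ℂ) ≠ 0 := by
    have : (m : ℝ) - 1 ≠ 0 := by linarith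
    exact_mod_cast this
  have hm0 : (m : ℂ) ≠ 0 := by
    have : (m : ℝ) ≠ 0 := by linarith
    exact_mod_cast this
  obtain ⟨r, hr, hr1, hr2⟩ := eig_aux H hHp (fun i j => sq_nonneg _) wstar hpos m hcol γ hγ0
    (((m : ℂ) - ((1:ℝ) : ℂ)) * (1 - μ)) (fun i => by
      have h1 := congrFun heq i
      rw [act 1 R1 j1 γ i, Pi.smul_apply, smul_eq_mul] at h1
      field_simp at h1
      linear_combination -h1)
  have hAr : ∀ i, (wstar i : ℂ) * ∑ j, (H i j : ℂ) * γ j = r * γ i := fun i => by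
      have h1 := congrFun heq i
      rw [act 1 R1 j1 γ i, Pi.smul_apply, smul_eq_mul] at h1
      rw [← hr]
      field_simp at h1
      linear_combination -h1
  have hμr : μ = ((1 - r / (m - 1) : ℝ) : ℂ) := by
    push_cast
    rw [← hr]
    push_cast at hmc ⊢
    field_simp
    ring
  have hle0 : 1 - r / m ≤ globalRate R0 hmap0 := by
    have hspec : ((1 - r / m : ℝ) : ℂ) ∈
        spectrum ℂ ((Matrix.toLin' (R0.map (Complex.ofReal : ℝ → ℂ))).restrict hmap0) := by
      apply Module.End.HasEigenvalue.mem_spectrum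
      apply Module.End.hasEigenvalue_of_hasEigenvector (x := ⟨γ, hγG⟩)
      refine ⟨Module.End.mem_eigenspace_iff.mpr (Subtype.ext ?_), fun h => hγ0 (congrArg Subtype.val h)⟩
      funext i
      have h2 := act 0 R0 j0 γ i
      rw [hAr] at h2
      simp only [LinearMap.restrict_apply, SetLike.mk_smul_mk, Pi.smul_apply, smul_eq_mul]
      rw [h2]
      push_cast
      rw [sub_zero]
      ring
    refine le_trans (le_abs_self _) ?_
    rw [← Real.norm_eq_abs, ← Complex.norm_real]
    apply le_csSup ((Module.End.finite_spectrum _).image _).bddAbove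
    exact ⟨_, hspec, rfl⟩
  show ‖μ‖ ≤ _
  rw [hμr, Complex.norm_real, Real.norm_eq_abs, abs_le']
  have hm1 : (0:ℝ) < m - 1 := by linarith
  constructor
  · refine le_trans ?_ hle0
    have : r / m ≤ r / (m - 1) := div_le_div_of_nonneg_left hr1 hm1 (by linarith)
    linarith
  · refine le_trans ?_ hbig
    have h5 : r / (m - 1) ≤ m / (m - 1) := by gcongr
    have h6 : (m:ℝ) / (m - 1) - 1 = 1 / (m - 1) := by field_simp; ring
    have h7 : 1 / ((m:ℝ) - 1) ≤ 2 / m := by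
      rw [div_le_div_iff₀ hm1 (by linarith)]; linarith
    linarith
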